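/- For every term α ∈ T: (1) tp(α) = 0 if and only if α = 0; (2) if tp(α) = 1 then α = α[0]+1; (3) if x < tp(α) then α[x] < α; (4) if x < y < tp(α) then α[x] < α[y]. -/

import Mathlib

set_option maxHeartbeats 1000000

attribute [local instance] Classical.propDecidable

/-- Raw terms of the system `T`: `0`, `1`, `ψᵢ a` and (right-nested) sums `a + b`. -/
inductive Tm : Type where
  | zero : Tm
  | one  : Tm
  | psi  : ℕ → Tm → Tm
  | add  : Tm → Tm → Tm
deriving DecidableEq

instance : Nonempty Tm := ⟨Tm.zero⟩

/-- Head (first summand) of a term. -/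
def Tm.hd : Tm → Tm
  | .add a _ => a
  | t => t

/-- Tail (remaining summands) of a term. -/
def Tm.tl : Tm → Tm
  | .add _ b => b
  | _ => .zero

/-- Whether a term is a genuine sum. -/
def Tm.isAdd : Tm → Prop
  | .add _ _ => True
  | _ => False

/-- The comparison relation `<` on terms of `T`. -/
inductive TLt : Tm → Tm → Prop where
  | zero_lt {a : Tm} : a ≠ Tm.zero → TLt Tm.zero a
  | one_lt_psi0 {a : Tm} : TLt Tm.one (Tm.psi 0 a)
  | psi_mono {i : ℕ} {a b : Tm} : TLt a b → TLt (Tm.psi i a) (Tm.psi i b)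
  | psi_lt {i j : ℕ} {a b : Tm} : i < j → TLt (Tm.psi i a) (Tm.psi j b)
  | lex_hd {a b : Tm} : (Tm.isAdd a ∨ Tm.isAdd b) → TLt (Tm.hd a) (Tm.hd b) → TLt a b
  | lex_tl {a b : Tm} : (Tm.isAdd a ∨ Tm.isAdd b) → Tm.hd a = Tm.hd b →
      TLt (Tm.tl a) (Tm.tl b) → TLt a b

/-- `≤` on terms. -/
def TLe (a b : Tm) : Prop := TLt a b ∨ a = b

/-- Addition of terms: summands of the left argument smaller than the head of the
right argument are discarded. -/
noncomputable def Tm.addT : Tm → Tm → Tm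
  | .zero, b => b
  | a, .zero => a
  | .add p r, b => if TLt p (Tm.hd b) then b else Tm.add p (Tm.addT r b)
  | a, b => if TLt a (Tm.hd b) then b else Tm.add a b

/-- The term representing a natural number. -/
def natToTm : ℕ → Tm
  | 0 => .zero
  | 1 => .one
  | n + 2 => Tm.add Tm.one (natToTm (n + 1))

/-- The natural number represented by a (numeral) term. -/
def tmToNat : Tm → ℕ
  | .zero => 0
  | .one => 1
  | .psi _ _ => 0
  | .add a b => tmToNat a + tmToNat b

/-- Multiplication of a (principal) term by a natural number. -/
noncomputable def mulNat (a : Tm) : ℕ → Tm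
  | 0 => .zero
  | n + 1 => Tm.addT (mulNat a n) a

/-- Principal terms: `1` and the `ψᵢ`-terms. -/
def Tm.IsPrincipal : Tm → Prop
  | .one => True
  | .psi _ _ => True
  | _ => False

/-- The well-formed terms of the system `T`. -/
inductive InT : Tm → Prop where
  | zero : InT .zero
  | one : InT .one
  | psi {i : ℕ} {a : Tm} : i < 3 → InT a → InT (.psi i a)
  | add {a b : Tm} : Tm.IsPrincipal a → InT a → InT b → b ≠ .zero →
      TLe (Tm.hd b) a → InT (.add a b)

/-- `ω := ψ₀0`. -/
def omegaT : Tm := .psi 0 .zero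
/-- `Ω := ψ₁0`. -/
def OmegaT : Tm := .psi 1 .zero
/-- `Ω₂ := ψ₂0`. -/
def Omega2T : Tm := .psi 2 .zero

/-- The type `tp(α)` of a term. -/
def tp : Tm → Tm
  | .zero => .zero
  | .one => .one
  | .add _ b => tp b
  | .psi i a =>
    if tp a = Tm.zero then Tm.psi i Tm.zero
    else if tp a = Tm.one then omegaT
    else if (i = 0 ∧ tp a = OmegaT) ∨ (i = 1 ∧ tp a = Omega2T) then omegaT
    else tp a

/-- The fundamental sequence `α[x]` of a term `α` at index `x`. -/
noncomputable def fund : Tm → Tm → Tm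
  | .zero, _ => .zero
  | .one, _ => .zero
  | .add a b, x => Tm.addT a (fund b x)
  | .psi i a, x =>
    if tp a = Tm.zero then x
    else if tp a = Tm.one then mulNat (Tm.psi i (fund a Tm.zero)) (tmToNat x)
    else if i = 0 ∧ tp a = OmegaT then
      Tm.psi 0 (fund a (Nat.rec (motive := fun _ => Tm) Tm.zero
        (fun _ ih => Tm.psi 0 (fund a ih)) (tmToNat x)))
    else if i = 1 ∧ tp a = Omega2T then
      Tm.psi 1 (fund a (Nat.rec (motive := fun _ => Tm) Tm.zero
        (fun _ ih => Tm.psi 1 (fund a ih)) (tmToNat x)))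
    else Tm.psi i (fund a x)
termination_by t _ => sizeOf t
decreasing_by all_goals simp

/-- The finite set `G₁(α)`. -/
def G1 : Tm → Finset Tm
  | .zero => ∅
  | .one => ∅
  | .psi 0 _ => ∅
  | .psi 1 b => insert b (G1 b)
  | .psi 2 b => G1 b
  | .psi (_ + 3) _ => ∅
  | .add a b => G1 a ∪ G1 b

/-- The finite set `G₀(α)`. -/
def G0 : Tm → Finset Tm
  | .zero => ∅
  | .one => ∅
  | .psi 0 b => insert b (G0 b)
  | .psi 1 b => G0 b
  | .psi 2 b => G0 b
  | .psi (_ + 3) _ => ∅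
  | .add a b => G0 a ∪ G0 b

/-- The well-founded subsystem `OT ⊆ T`. -/
inductive InOT : Tm → Prop where
  | zero : InOT .zero
  | one : InOT .one
  | psi2 {b : Tm} : InOT b → InOT (.psi 2 b)
  | add {a b : Tm} : InT (.add a b) → InOT a → InOT b → InOT (.add a b)
  | psi1 {b : Tm} : InOT b → (∀ γ ∈ G1 b, TLt γ b) → InOT (.psi 1 b)
  | psi0 {b : Tm} : InOT b → (∀ γ ∈ G0 b, TLt γ b) → TLt b Omega2T → InOT (.psi 0 b)

/-- The norm `N(α)`. -/
def normN : Tm → ℕ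
  | .zero => 0
  | .one => 1
  | .psi _ b => 1 + normN b
  | .add a b => normN a + normN b

/-- `OT₀ := {α ∈ OT : α < ψ₁Ω₂ and G₀α < ψ₁Ω₂}`. -/
def InOT0 (a : Tm) : Prop :=
  InOT a ∧ TLt a (Tm.psi 1 Omega2T) ∧ ∀ γ ∈ G0 a, TLt γ (Tm.psi 1 Omega2T)

/-- Single-step descent: `b = a[x]` for some term `x ≤ n`. -/
def stepLe (n : ℕ) (b a : Tm) : Prop := ∃ x : Tm, TLe x (natToTm n) ∧ b = fund a x

/-- `a <ₙ b` : transitive closure of single-step descent. -/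
def ltN (n : ℕ) (a b : Tm) : Prop := Relation.TransGen (stepLe n) a b

/-- `a ≤ₙ b` : reflexive transitive closure of single-step descent. -/
def leN (n : ℕ) (a b : Tm) : Prop := Relation.ReflTransGen (stepLe n) a b

mutual
/-- Graph of the Hardy hierarchy: `HRel α k n` means `H_α(k) = n`. -/
inductive HRel : Tm → ℕ → ℕ → Prop where
  | zero {k : ℕ} : HRel Tm.zero k k
  | succ {α : Tm} {k n : ℕ} : tp α = Tm.one → HRel (fund α Tm.zero) k n →
      HRel α k (n * k)
  | lim {α β : Tm} {k n : ℕ} : tp α = omegaT → HIter α k k β → HRel β k n →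
      HRel α k n

/-- Graph of the iteration `α{b}`: `HIter α k b β` means `α{b} = β`
(where `α{0} = α[0]` and `α{b+1} = α[H_(α{b})(k)]`). -/
inductive HIter : Tm → ℕ → ℕ → Tm → Prop where
  | zero {α : Tm} {k : ℕ} : HIter α k 0 (fund α Tm.zero)
  | succ {α β : Tm} {k b n : ℕ} : HIter α k b β → HRel β k n →
      HIter α k (b + 1) (fund α (natToTm n))
end

/-- The Hardy function `H_α(k)`. -/
noncomputable def H (α : Tm) (k : ℕ) : ℕ := sInf {n | HRel α k n}

/-- The (unique, when it exists) ordinal term of the `k`-normal form of `m`: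
the maximal `α ∈ OT₀ ∩ Ω` with `H_α(k) ≤ m`. -/
noncomputable def nfAlpha (k m : ℕ) : Tm :=
  Classical.epsilon fun α =>
    InOT0 α ∧ TLt α OmegaT ∧ H α k ≤ m ∧
      ∀ β : Tm, InOT0 β → TLt β OmegaT → TLt α β → m < H β k

theorem tmToNat_le_normN (t : Tm) : tmToNat t ≤ normN t := by
  induction t with
  | zero => simp [tmToNat, normN]
  | one => simp [tmToNat, normN]
  | psi i a ih => simp [tmToNat, normN]
  | add a b iha ihb => simp only [tmToNat, normN]; omega

mutual
/-- Base change `α[k ← k+1]` on terms. -/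
noncomputable def bcT (k : ℕ) : Tm → Tm
  | .zero => .zero
  | .one => .one
  | .psi i a => .psi i (bcT k a)
  | .add a b =>
      if a = Tm.one then natToTm (bcN k (tmToNat (Tm.add a b)))
      else if h : 0 < normN a ∧ 0 < normN b then Tm.add (bcT k a) (bcT k b)
      else Tm.zero
termination_by a => 2 * normN a + 1
decreasing_by
  all_goals simp only [normN]
  · omega
  · have := tmToNat_le_normN (Tm.add a b); simp only [normN] at this ⊢; omega
  · omega
  · omega

/-- Base change `m[k ← k+1]` on natural numbers. -/
noncomputable def bcN (k m : ℕ) : ℕ :=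
  if h1 : m < k then m
  else if h2 : m = k then k + 1
  else if hg : normN (nfAlpha k m) < m ∧ 0 < H (nfAlpha k m) k ∧ H (nfAlpha k m) k ≤ m then
    H (bcT k (nfAlpha k m)) (k + 1) * (m / H (nfAlpha k m) k) + bcN k (m % H (nfAlpha k m) k)
  else 0
termination_by 2 * m
decreasing_by
  · omega
  · have := Nat.mod_lt m (y := H (nfAlpha k m) k) hg.2.1; omega
end

mutual
/-- The ordinal assignment `o_k` on terms of `OT₀`. -/
noncomputable def oT (k : ℕ) : Tm → Tm
  | .zero => .zero
  | .one => .one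
  | .psi 0 b => .psi 1 (oT k b)
  | .psi 1 b => .psi 2 (oT k b)
  | .psi (_ + 2) _ => .zero
  | .add a b =>
      if a = Tm.one then oN k (tmToNat (Tm.add a b))
      else if h : 0 < normN a ∧ 0 < normN b then Tm.addT (oT k a) (oT k b)
      else Tm.zero
termination_by a => 2 * normN a + 1
decreasing_by
  all_goals simp only [normN]
  · omega
  · omega
  · have := tmToNat_le_normN (Tm.add a b); simp only [normN] at this ⊢; omega
  · omega
  · omega

/-- The ordinal assignment `o_k` on natural numbers. -/
noncomputable def oN (k m : ℕ) : Tm :=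
  if h1 : m < k then natToTm m
  else if h2 : m = k then omegaT
  else if hg : normN (nfAlpha k m) < m ∧ 0 < H (nfAlpha k m) k ∧ H (nfAlpha k m) k ≤ m then
    Tm.addT (Tm.psi 0 (oT k (nfAlpha k m))) (oN k (m - H (nfAlpha k m) k))
  else Tm.zero
termination_by 2 * m
decreasing_by
  · omega
  · omega
end

/-- Ordinal contexts: a term with a single hole, either replacing a summand
(`ξ + ⟦·⟧ + η`) or nested under collapsing functions (`ξ + ψᵢ(μ⟦·⟧) + η`). -/
inductive Ctx : Type where
  | base : Tm → Tm → Ctx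
  | psiC : Tm → ℕ → Ctx → Tm → Ctx

/-- Filling the hole of a context with a term. -/
noncomputable def Ctx.fill : Ctx → Tm → Tm
  | .base ξ η, γ => Tm.addT (Tm.addT ξ γ) η
  | .psiC ξ i μ η, γ => Tm.addT (Tm.addT ξ (Tm.psi i (Ctx.fill μ γ))) η

/-- The truncated context `λ⁻⟦·⟧`: all summands following the hole are removed,
at every level. -/
def Ctx.trunc : Ctx → Ctx
  | .base ξ _ => .base ξ Tm.zero
  | .psiC ξ i μ _ => .psiC ξ i (Ctx.trunc μ) Tm.zero

/-- A context is valid if only `ψ₀` and `ψ₁` occur on the path to the hole. -/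
def Ctx.Valid : Ctx → Prop
  | .base _ _ => True
  | .psiC _ i μ _ => i ≤ 1 ∧ Ctx.Valid μ

/-- A context is `ψ₀`-nesting free if its hole is not in the scope of a `ψ₀`. -/
def Ctx.NestFree : Ctx → Prop
  | .base _ _ => True
  | .psiC _ i μ _ => i = 1 ∧ Ctx.NestFree μ

/-!
The induction over `T` shows that `a[x] < a` and that `x ↦ a[x]` is increasing; the delicate point
is the sum `p + b`, where `p` must not be discarded in `p + b[x]`.

The clauses of `TLt` do not yield `1 < ψ₁ 0`, although `1 < ψ₀ 0 < ψ₁ 0`. Hence `TLt` is not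
transitive, and `T` is not closed under fundamental sequences: `(Ω + ω)[1] = Ω + 1` is not in `T`.
The values `a[x]` and the indices `x` therefore range over larger classes of terms, on which `TLt`
is contained in a transitive relation, the lexicographic order of words over `ℕ`. If `p` were
discarded in `p + b[x]`, that order would contain the cycle `b[x] < b < b[x]`.
-/

/-- Words `u`, `v` such that `u` is lexicographically smaller however both are continued, that is,
they first differ at a position inside both. -/
def LexBelow (u v : List ℕ) : Prop := ∀ s t, u ++ s < v ++ t

namespace LexBelow

variable {u v w : List ℕ}

theorem of_head_lt {m n : ℕ} (h : m < n) : LexBelow (m :: u) (n :: v) :=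
  fun _ _ => List.Lex.rel h

theorem trans (huv : LexBelow u v) (hvw : LexBelow v w) : LexBelow u w :=
  fun s t => lt_trans (huv s []) (hvw [] t)

theorem irrefl : ¬ LexBelow u u := fun h => lt_irrefl _ (h [] [])

theorem asymm (huv : LexBelow u v) : ¬ LexBelow v u := fun hvu => irrefl (huv.trans hvu)

theorem append_right (h : LexBelow u v) (s t : List ℕ) : LexBelow (u ++ s) (v ++ t) := by
  intro s' t'
  simpa only [List.append_assoc] using h (s ++ s') (t ++ t')

theorem append_left (w : List ℕ) (h : LexBelow u v) : LexBelow (w ++ u) (w ++ v) := by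
  intro s t
  simpa only [List.append_assoc] using List.append_left_lt (h s t)

end LexBelow

theorem TLt.ne_zero {a b : Tm} (h : TLt a b) : b ≠ .zero := by
  induction h with
  | zero_lt h => exact h
  | one_lt_psi0 | psi_mono _ _ | psi_lt _ => exact Tm.noConfusion
  | lex_hd _ _ ih | lex_tl _ _ _ ih => rintro rfl; exact ih rfl

theorem TLt.ne {a b : Tm} (h : TLt a b) : a ≠ b := by
  induction h with
  | zero_lt h => exact h.symm
  | one_lt_psi0 => exact Tm.noConfusion
  | psi_mono _ ih => simpa using ih
  | psi_lt h => simp [h.ne]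
  | lex_hd _ _ ih | lex_tl _ _ _ ih => rintro rfl; exact ih rfl

theorem TLt.irrefl {a : Tm} : ¬ TLt a a := fun h => h.ne rfl

theorem TLt.not_lt_zero {a : Tm} : ¬ TLt a .zero := fun h => h.ne_zero rfl

theorem not_psi_lt_omegaT {i : ℕ} {a : Tm} : ¬ TLt (.psi i a) omegaT := by
  intro h
  cases h with
  | psi_mono h => exact h.not_lt_zero
  | psi_lt h => exact Nat.not_lt_zero _ h
  | lex_hd h _ | lex_tl h _ _ => simp [Tm.isAdd, omegaT] at h

namespace Tm

variable {a b f g p q r x : Tm}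

theorem isPrincipal_one : IsPrincipal .one := trivial

theorem isPrincipal_psi (i : ℕ) (a : Tm) : (psi i a).IsPrincipal := trivial

theorem IsPrincipal.ne_zero (hp : p.IsPrincipal) : p ≠ .zero := by
  rintro rfl; exact hp

theorem IsPrincipal.not_isAdd (hp : p.IsPrincipal) : ¬ p.isAdd := by
  cases p <;> simp_all [IsPrincipal, isAdd]

theorem IsPrincipal.hd_eq (hp : p.IsPrincipal) : p.hd = p := by
  cases p <;> simp_all [IsPrincipal, hd]

theorem IsPrincipal.tl_eq (hp : p.IsPrincipal) : p.tl = .zero := by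
  cases p <;> simp_all [IsPrincipal, tl]

theorem IsPrincipal.not_lt_one (hp : p.IsPrincipal) : ¬ TLt p .one := by
  cases p with
  | zero | add => exact hp.elim
  | one => exact TLt.irrefl
  | psi =>
    intro h
    cases h with
    | lex_hd h _ | lex_tl h _ _ => simp [isAdd] at h

theorem IsPrincipal.eq_one_of_lt_omegaT (hp : p.IsPrincipal) (h : TLt p omegaT) : p = .one := by
  cases p with
  | zero | add => exact hp.elim
  | one => rfl
  | psi => exact (not_psi_lt_omegaT h).elim

/-- Right-nested sums of principal terms, without the conditions of `InT` on the order of the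
summands and on the indices of `ψ`. Unlike `InT`, this class is closed under `fund`. -/
inductive IsPreterm : Tm → Prop where
  | zero : IsPreterm .zero
  | one : IsPreterm .one
  | psi {i : ℕ} {a : Tm} : IsPreterm a → IsPreterm (.psi i a)
  | add {a b : Tm} : a.IsPrincipal → IsPreterm a → IsPreterm b → b ≠ .zero → IsPreterm (.add a b)

theorem _root_.InT.isPreterm (h : InT a) : a.IsPreterm := by
  induction h with
  | zero => exact .zero
  | one => exact .one
  | psi _ _ ih => exact .psi ih
  | add hp _ _ hb _ iha ihb => exact .add hp iha ihb hb

namespace IsPreterm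

theorem isPrincipal_hd (ha : a.IsPreterm) (h0 : a ≠ .zero) : a.hd.IsPrincipal := by
  cases ha with
  | zero => exact absurd rfl h0
  | one | psi _ => trivial
  | add hp _ _ _ => exact hp

theorem hd (ha : a.IsPreterm) : a.hd.IsPreterm := by
  cases ha with
  | zero => exact .zero
  | one => exact .one
  | psi h => exact .psi h
  | add _ h _ _ => exact h

theorem tl (ha : a.IsPreterm) : a.tl.IsPreterm := by
  cases ha with
  | zero | one | psi _ => exact .zero
  | add _ _ h _ => exact h

end IsPreterm

theorem _root_.TLt.hd_lt_or_tl_lt (h : TLt a b) (hb : b.IsPreterm) :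
    TLt a.hd b.hd ∨ a.hd = b.hd ∧ TLt a.tl b.tl := by
  cases h with
  | zero_lt h0 => exact .inl (.zero_lt (hb.isPrincipal_hd h0).ne_zero)
  | one_lt_psi0 => exact .inl .one_lt_psi0
  | psi_mono h => exact .inl (.psi_mono h)
  | psi_lt h => exact .inl (.psi_lt h)
  | lex_hd _ h => exact .inl h
  | lex_tl _ he h => exact .inr ⟨he, h⟩

/-! ### Words -/

/-- Polish notation for terms: the letter `i + 2` opens the scope of `ψᵢ`, the letter `0` closes it
and `1` stands for `1`. As `0` is the least letter, the lexicographic order of closed words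
ranks a sum above its proper initial segments. -/
def word : Tm → List ℕ
  | .zero => []
  | .one => [1]
  | .psi i a => (i + 2) :: (word a ++ [0])
  | .add a b => word a ++ word b

/-- The lexicographic order of closed words: a strict order containing `TLt` on preterms. -/
def WordLT (a b : Tm) : Prop := LexBelow (word a ++ [0]) (word b ++ [0])

theorem word_hd_append_word_tl (a : Tm) : word a.hd ++ word a.tl = word a := by
  cases a <;> simp [word, hd, tl]

theorem WordLT.of_hd (h : LexBelow (word a.hd) (word b.hd)) : WordLT a b := by
  rw [WordLT, ← word_hd_append_word_tl a, ← word_hd_append_word_tl b]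
  exact (h.append_right _ _).append_right _ _

theorem WordLT.of_tl (he : a.hd = b.hd) (h : WordLT a.tl b.tl) : WordLT a b := by
  rw [WordLT, ← word_hd_append_word_tl a, ← word_hd_append_word_tl b, he, List.append_assoc,
    List.append_assoc]
  exact h.append_left _

theorem IsPrincipal.exists_word_eq (hp : p.IsPrincipal) : ∃ n l, word p = (n + 1) :: l := by
  cases p with
  | zero | add => exact hp.elim
  | one => exact ⟨0, [], rfl⟩
  | psi i a => exact ⟨i + 1, _, rfl⟩

theorem IsPreterm.zero_wordLT (ha : a.IsPreterm) (h0 : a ≠ .zero) : WordLT .zero a := by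
  obtain ⟨n, l, hw⟩ := (ha.isPrincipal_hd h0).exists_word_eq
  rw [WordLT, ← word_hd_append_word_tl a, hw]
  exact .of_head_lt n.succ_pos

/-- The two parts are proved together: the arguments of `ψᵢ` are compared by closed words, while
the heads of two sums are followed by arbitrary further summands. -/
theorem _root_.TLt.wordLT_and_lexBelow (h : TLt a b) :
    a.IsPreterm → b.IsPreterm →
      WordLT a b ∧ (a.IsPrincipal → b.IsPrincipal → LexBelow (word a) (word b)) := by
  have of_principal {a b : Tm} (h : LexBelow (word a) (word b)) :
      WordLT a b ∧ (a.IsPrincipal → b.IsPrincipal → LexBelow (word a) (word b)) :=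
    ⟨h.append_right _ _, fun _ _ => h⟩
  have of_isAdd {a b : Tm} (hadd : a.isAdd ∨ b.isAdd) (h : WordLT a b) :
      WordLT a b ∧ (a.IsPrincipal → b.IsPrincipal → LexBelow (word a) (word b)) :=
    ⟨h, fun ha hb => (hadd.elim ha.not_isAdd hb.not_isAdd).elim⟩
  induction h with
  | zero_lt h0 => exact fun _ hb => ⟨hb.zero_wordLT h0, fun h => h.elim⟩
  | one_lt_psi0 => exact fun _ _ => of_principal (.of_head_lt (by omega))
  | @psi_mono i _ _ _ ih =>
    rintro (_ | _ | ha) (_ | _ | hb)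
    exact of_principal ((ih ha hb).1.append_left [i + 2])
  | psi_lt h => exact fun _ _ => of_principal (.of_head_lt (by omega))
  | @lex_hd a b hadd hlt ih =>
    intro ha hb
    have hb0 : b ≠ .zero := by rintro rfl; exact hlt.not_lt_zero
    refine of_isAdd hadd ?_
    by_cases ha0 : a = .zero
    · exact ha0 ▸ hb.zero_wordLT hb0
    · exact .of_hd ((ih ha.hd hb.hd).2 (ha.isPrincipal_hd ha0) (hb.isPrincipal_hd hb0))
  | lex_tl hadd he _ ih =>
    exact fun ha hb => of_isAdd hadd (.of_tl he (ih ha.tl hb.tl).1)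

theorem _root_.TLt.wordLT (h : TLt a b) (ha : a.IsPreterm) (hb : b.IsPreterm) : WordLT a b :=
  (h.wordLT_and_lexBelow ha hb).1

theorem _root_.TLt.lexBelow_word (h : TLt p q) (hp : p.IsPrincipal) (hp' : p.IsPreterm)
    (hq : q.IsPrincipal) (hq' : q.IsPreterm) : LexBelow (word p) (word q) :=
  (h.wordLT_and_lexBelow hp' hq').2 hp hq

theorem _root_.TLt.asymm (h : TLt a b) (ha : a.IsPreterm) (hb : b.IsPreterm) : ¬ TLt b a :=
  fun h' => (h.wordLT ha hb).asymm (h'.wordLT hb ha)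

theorem not_lt_hd_of_not_wordLT (hp : p.IsPrincipal) (hp' : p.IsPreterm) (hb : b.IsPreterm)
    (hb0 : b ≠ .zero) (hf : f.IsPreterm) (hbp : TLe b.hd p) (hbf : ¬ WordLT b f) :
    ¬ TLt p f.hd := by
  intro hpf
  have hf0 : f ≠ .zero := by rintro rfl; exact hpf.not_lt_zero
  have hword := hpf.lexBelow_word hp hp' (hf.isPrincipal_hd hf0) hf.hd
  refine hbf (.of_hd ?_)
  rcases hbp with hlt | heq
  · exact (hlt.lexBelow_word (hb.isPrincipal_hd hb0) hb.hd hp hp').trans hword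
  · rwa [heq]

/-! ### Addition -/

theorem zero_addT (b : Tm) : addT .zero b = b := by
  rw [addT]

theorem addT_zero (a : Tm) : a.addT .zero = a := by
  cases a <;> simp [addT]

theorem addT_of_lt (h : TLt a.hd b.hd) : a.addT b = b := by
  have hb0 : b ≠ .zero := by rintro rfl; exact h.not_lt_zero
  cases a <;> cases b <;> simp_all [addT, hd]

theorem IsPrincipal.addT_eq_add (hp : p.IsPrincipal) (hb0 : b ≠ .zero) (h : ¬ TLt p b.hd) :
    p.addT b = .add p b := by
  cases p <;> cases b <;> simp_all [addT, IsPrincipal]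

theorem add_addT (hb0 : b ≠ .zero) (h : ¬ TLt p b.hd) :
    (add p r).addT b = .add p (r.addT b) := by
  cases b <;> simp_all [addT]

theorem addT_ne_zero (hb0 : b ≠ .zero) : a.addT b ≠ .zero := by
  cases a <;> cases b <;> simp_all [addT] <;> split_ifs <;> simp

theorem hd_addT (a b : Tm) : (a.addT b).hd = a.hd ∨ (a.addT b).hd = b.hd := by
  by_cases hb0 : b = .zero
  · rw [hb0, addT_zero]; exact .inl rfl
  by_cases hlt : TLt a.hd b.hd
  · rw [addT_of_lt hlt]; exact .inr rfl
  cases a with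
  | zero => rw [zero_addT]; exact .inr rfl
  | one => rw [isPrincipal_one.addT_eq_add hb0 hlt]; exact .inl rfl
  | psi i a => rw [(isPrincipal_psi i a).addT_eq_add hb0 hlt]; exact .inl rfl
  | add p r => rw [add_addT (p := p) hb0 hlt]; exact .inl rfl

theorem addT_assoc_of_not_lt (hp : p.IsPrincipal) (ha : ¬ TLt p a.hd) (hb : ¬ TLt p b.hd) :
    (p.addT a).addT b = p.addT (a.addT b) := by
  by_cases ha0 : a = .zero
  · rw [ha0, addT_zero, zero_addT]
  by_cases hb0 : b = .zero
  · rw [hb0, addT_zero, addT_zero]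
  have hab : ¬ TLt p (a.addT b).hd := by
    rcases hd_addT a b with h | h <;> rwa [h]
  rw [hp.addT_eq_add ha0 ha, add_addT hb0 hb, hp.addT_eq_add (addT_ne_zero hb0) hab]

theorem addT_lt_addT (hp : p.IsPrincipal) (hf : ¬ TLt p f.hd) (hg : ¬ TLt p g.hd)
    (h : TLt f g) : TLt (p.addT f) (p.addT g) := by
  rw [hp.addT_eq_add h.ne_zero hg]
  by_cases hf0 : f = .zero
  · subst hf0
    rw [addT_zero]
    exact .lex_tl (.inr trivial) hp.hd_eq (by rwa [hp.tl_eq])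
  · rw [hp.addT_eq_add hf0 hf]
    exact .lex_tl (.inr trivial) rfl h

theorem IsPreterm.addT_of_isPrincipal (hp : p.IsPrincipal) (hp' : p.IsPreterm)
    (hb : b.IsPreterm) (hb0 : b ≠ .zero) : (p.addT b).IsPreterm := by
  by_cases hlt : TLt p b.hd
  · rwa [addT_of_lt (by rwa [hp.hd_eq])]
  · rw [hp.addT_eq_add hb0 hlt]
    exact .add hp hp' hb hb0

theorem IsPreterm.addT (ha : a.IsPreterm) (hb : b.IsPreterm) : (a.addT b).IsPreterm := by
  by_cases hb0 : b = .zero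
  · rwa [hb0, addT_zero]
  induction ha with
  | zero => rwa [zero_addT]
  | one => exact .addT_of_isPrincipal isPrincipal_one .one hb hb0
  | psi ha _ => exact .addT_of_isPrincipal (isPrincipal_psi _ _) (.psi ha) hb hb0
  | @add p r hp hp' _ _ _ ih =>
    by_cases hlt : TLt p b.hd
    · rwa [addT_of_lt (a := .add p r) hlt]
    · rw [add_addT hb0 hlt]
      exact .add hp hp' ih (addT_ne_zero hb0)

/-! ### Multiples and numerals -/

theorem IsPreterm.mulNat (hp : p.IsPreterm) (n : ℕ) : (mulNat p n).IsPreterm := by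
  induction n with
  | zero => exact .zero
  | succ n ih => exact ih.addT hp

theorem IsPrincipal.hd_mulNat (hp : p.IsPrincipal) (n : ℕ) :
    (mulNat p n).hd = .zero ∨ (mulNat p n).hd = p := by
  induction n with
  | zero => exact .inl rfl
  | succ n ih =>
    rcases hd_addT (mulNat p n) p with h | h
    · rwa [mulNat, h]
    · exact .inr (h.trans hp.hd_eq)

theorem IsPrincipal.not_lt_hd_mulNat (hp : p.IsPrincipal) (n : ℕ) :
    ¬ TLt p (mulNat p n).hd := by
  rcases hp.hd_mulNat n with h | h <;> rw [h]
  exacts [TLt.not_lt_zero, TLt.irrefl]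

theorem IsPrincipal.mulNat_succ' (hp : p.IsPrincipal) (n : ℕ) :
    mulNat p (n + 1) = p.addT (mulNat p n) := by
  induction n with
  | zero => exact (zero_addT p).trans (addT_zero p).symm
  | succ n ih =>
    have hpp : ¬ TLt p p.hd := by rw [hp.hd_eq]; exact TLt.irrefl
    rw [mulNat, ih, addT_assoc_of_not_lt hp (hp.not_lt_hd_mulNat n) hpp, ← mulNat, ih]

theorem IsPrincipal.mulNat_lt_mulNat (hp : p.IsPrincipal) {m n : ℕ} (h : m < n) :
    TLt (mulNat p m) (mulNat p n) := by
  induction n generalizing m with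
  | zero => exact (Nat.not_lt_zero m h).elim
  | succ n ih =>
    cases m with
    | zero => exact .zero_lt (addT_ne_zero hp.ne_zero)
    | succ m =>
      rw [hp.mulNat_succ', hp.mulNat_succ']
      exact addT_lt_addT hp (hp.not_lt_hd_mulNat m) (hp.not_lt_hd_mulNat n)
        (ih (Nat.lt_of_succ_lt_succ h))

theorem IsPrincipal.mulNat_lt (hp : p.IsPrincipal) (hq : q.IsPrincipal) (h : TLt p q) (n : ℕ) :
    TLt (mulNat p n) q := by
  cases n with
  | zero => exact .zero_lt hq.ne_zero
  | succ n =>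
    rw [hp.mulNat_succ']
    by_cases h0 : mulNat p n = .zero
    · rwa [h0, addT_zero]
    · rw [hp.addT_eq_add h0 (hp.not_lt_hd_mulNat n)]
      exact .lex_hd (.inl trivial) (by rwa [hq.hd_eq])

theorem _root_.natToTm_succ_ne_zero (n : ℕ) : natToTm (n + 1) ≠ .zero := by
  cases n <;> exact Tm.noConfusion

theorem _root_.natToTm_eq_mulNat_one (n : ℕ) : natToTm n = mulNat .one n := by
  induction n with
  | zero => rfl
  | succ n ih =>
    rw [isPrincipal_one.mulNat_succ', ← ih]
    cases n with
    | zero => exact (addT_zero _).symm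
    | succ n =>
      refine (isPrincipal_one.addT_eq_add (natToTm_succ_ne_zero n) ?_).symm
      rw [ih]
      exact isPrincipal_one.not_lt_hd_mulNat _

theorem _root_.tmToNat_natToTm : ∀ n : ℕ, tmToNat (natToTm n) = n
  | 0 => rfl
  | 1 => rfl
  | n + 2 => by rw [natToTm, tmToNat, tmToNat_natToTm (n + 1), tmToNat, Nat.add_comm]

theorem _root_.isPreterm_natToTm (n : ℕ) : (natToTm n).IsPreterm := by
  rw [natToTm_eq_mulNat_one]
  exact IsPreterm.one.mulNat n

theorem _root_.natToTm_lt_natToTm_iff {m n : ℕ} : TLt (natToTm m) (natToTm n) ↔ m < n := by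
  have mono {m n : ℕ} (h : m < n) : TLt (natToTm m) (natToTm n) := by
    rw [natToTm_eq_mulNat_one, natToTm_eq_mulNat_one]
    exact isPrincipal_one.mulNat_lt_mulNat h
  refine ⟨fun h => ?_, mono⟩
  rcases lt_trichotomy m n with hlt | rfl | hgt
  · exact hlt
  · exact (h.irrefl).elim
  · exact (h.asymm (isPreterm_natToTm m) (isPreterm_natToTm n) (mono hgt)).elim

/-! ### Indices -/

/-- Preterms that are admissible as arguments of fundamental sequences. This class contains both
`T` and all preterms `ψᵢ a`, but not `1 + ψ₁ 0`, which precedes `ω` in the sense of `TLt` without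
being a numeral. -/
structure IsIndex (x : Tm) : Prop where
  isPreterm : x.IsPreterm
  exists_eq_natToTm : x.hd = .one → ∃ n, x = natToTm n

theorem IsPreterm.isIndex_psi (ha : a.IsPreterm) (i : ℕ) : IsIndex (.psi i a) :=
  ⟨.psi ha, Tm.noConfusion⟩

theorem _root_.InT.isIndex (hx : InT x) : IsIndex x := by
  refine ⟨hx.isPreterm, ?_⟩
  induction hx with
  | zero | psi => exact Tm.noConfusion
  | one => exact fun _ => ⟨1, rfl⟩
  | @add p b _ _ hb hb0 hbp _ ih =>
    rintro (rfl : p = .one)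
    have hhd : b.hd = .one := hbp.resolve_left (hb.isPreterm.isPrincipal_hd hb0).not_lt_one
    obtain ⟨_ | n, rfl⟩ := ih hhd
    · exact absurd rfl hb0
    · exact ⟨n + 2, rfl⟩

theorem IsIndex.exists_eq_natToTm_of_lt_omegaT (hx : IsIndex x) (h : TLt x omegaT) :
    ∃ n, x = natToTm n := by
  by_cases h0 : x = .zero
  · exact ⟨0, h0⟩
  refine hx.exists_eq_natToTm ((hx.isPreterm.isPrincipal_hd h0).eq_one_of_lt_omegaT ?_)
  exact (h.hd_lt_or_tl_lt (.psi .zero)).resolve_right fun htl => htl.2.not_lt_zero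

theorem IsIndex.exists_lt_eq_natToTm (hx : IsIndex x) {n : ℕ} (h : TLt x (natToTm n)) :
    ∃ m < n, x = natToTm m := by
  suffices ∃ m, x = natToTm m by
    obtain ⟨m, rfl⟩ := this
    exact ⟨m, natToTm_lt_natToTm_iff.1 h, rfl⟩
  by_cases h0 : x = .zero
  · exact ⟨0, h0⟩
  have hprin := hx.isPreterm.isPrincipal_hd h0
  have hhd : (natToTm n).hd = .zero ∨ (natToTm n).hd = .one := by
    rw [natToTm_eq_mulNat_one]
    exact isPrincipal_one.hd_mulNat n
  apply hx.exists_eq_natToTm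
  rcases h.hd_lt_or_tl_lt (isPreterm_natToTm n), hhd with ⟨hlt | ⟨heq, _⟩, hz | ho⟩
  · exact (TLt.not_lt_zero (hz ▸ hlt)).elim
  · exact (hprin.not_lt_one (ho ▸ hlt)).elim
  · exact (hprin.ne_zero (heq.trans hz)).elim
  · exact heq.trans ho

/-! ### Types and fundamental sequences -/

theorem IsPreterm.tp_eq_zero_iff (ha : a.IsPreterm) : tp a = .zero ↔ a = .zero := by
  induction ha with
  | zero => simp [tp]
  | one => simp [tp]
  | psi _ _ =>
    rw [tp]
    split_ifs <;> simp_all [omegaT]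
  | add _ _ _ h0 _ ih => simp [tp, ih, h0]

/-- The type of `a` is collapsed by `ψᵢ`, so that `ψᵢ a` has type `ω`. -/
def Collapses (i : ℕ) (a : Tm) : Prop := i < 2 ∧ tp a = .psi (i + 1) .zero

/-- The sequence `z_n` of the definition of `(ψᵢ a)[n]` when `ψᵢ` collapses the type of `a`. -/
noncomputable def collapseSeq (i : ℕ) (a : Tm) : ℕ → Tm
  | 0 => .zero
  | n + 1 => .psi i (fund a (collapseSeq i a n))

theorem collapses_iff {i : ℕ} :
    Collapses i a ↔ i = 0 ∧ tp a = OmegaT ∨ i = 1 ∧ tp a = Omega2T := by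
  rcases i with _ | _ | i <;> simp [Collapses, OmegaT, Omega2T]

theorem collapseSeq_eq_rec (i : ℕ) (a : Tm) (n : ℕ) :
    collapseSeq i a n = Nat.rec (motive := fun _ => Tm) .zero (fun _ z => .psi i (fund a z)) n := by
  induction n with
  | zero => rfl
  | succ n ih => rw [collapseSeq, ih]

section Psi

variable {i : ℕ}

theorem tp_psi_zero : tp (.psi i .zero) = .psi i .zero := by
  simp [tp]

theorem fund_psi_zero : fund (.psi i .zero) x = x := by
  simp [fund, tp]

theorem tp_psi_of_tp_eq_one (h1 : tp a = .one) : tp (.psi i a) = omegaT := by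
  simp [tp, h1]

theorem fund_psi_of_tp_eq_one (h1 : tp a = .one) :
    fund (.psi i a) x = mulNat (.psi i (fund a .zero)) (tmToNat x) := by
  simp [fund, h1]

theorem tp_psi_of_collapses (h : Collapses i a) : tp (.psi i a) = omegaT := by
  rw [tp, if_neg (by simp [h.2]), if_neg (by simp [h.2]), if_pos (collapses_iff.1 h)]

theorem fund_psi_of_collapses (h : Collapses i a) :
    fund (.psi i a) x = .psi i (fund a (collapseSeq i a (tmToNat x))) := by
  rw [fund, if_neg (by simp [h.2]), if_neg (by simp [h.2]), collapseSeq_eq_rec]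
  rcases collapses_iff.1 h with ⟨rfl, ht⟩ | ⟨rfl, ht⟩ <;> simp [ht]

theorem tp_psi_of_not_collapses (h0 : tp a ≠ .zero) (h1 : tp a ≠ .one) (h : ¬ Collapses i a) :
    tp (.psi i a) = tp a := by
  rw [tp, if_neg h0, if_neg h1, if_neg (mt collapses_iff.2 h)]

theorem fund_psi_of_not_collapses (h0 : tp a ≠ .zero) (h1 : tp a ≠ .one) (h : ¬ Collapses i a) :
    fund (.psi i a) x = .psi i (fund a x) := by
  rw [collapses_iff, not_or] at h
  rw [fund, if_neg h0, if_neg h1, if_neg h.1, if_neg h.2]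

end Psi

theorem IsPreterm.fund (ha : a.IsPreterm) (hx : x.IsPreterm) : (fund a x).IsPreterm := by
  induction ha generalizing x with
  | zero | one => rw [_root_.fund]; exact .zero
  | add _ hp' _ _ _ ih => rw [_root_.fund]; exact hp'.addT (ih hx)
  | @psi i a ha ih =>
    by_cases h0 : tp a = .zero
    · rw [ha.tp_eq_zero_iff] at h0
      rwa [h0, fund_psi_zero]
    by_cases h1 : tp a = .one
    · rw [fund_psi_of_tp_eq_one h1]; exact (IsPreterm.psi (ih .zero)).mulNat _
    by_cases hc : Collapses i a
    · have hz (n : ℕ) : (collapseSeq i a n).IsPreterm := by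
        induction n with
        | zero => exact .zero
        | succ n hn => exact .psi (ih hn)
      rw [fund_psi_of_collapses hc]; exact .psi (ih (hz _))
    · rw [fund_psi_of_not_collapses h0 h1 hc]; exact .psi (ih hx)

theorem IsPreterm.isIndex_collapseSeq (ha : a.IsPreterm) (i n : ℕ) :
    IsIndex (collapseSeq i a n) := by
  induction n with
  | zero => exact InT.zero.isIndex
  | succ n ih => exact (ha.fund ih.isPreterm).isIndex_psi i

theorem collapseSeq_lt (i : ℕ) (a : Tm) (n : ℕ) :
    TLt (collapseSeq i a n) (.psi (i + 1) .zero) := by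
  cases n with
  | zero => exact .zero_lt Tm.noConfusion
  | succ n => exact .psi_lt i.lt_succ_self

/-- Properties (3) and (4) of the fundamental sequence of `a`, for all indices and not only those
in `T`: the iterates `collapseSeq i a n` need not lie in `T`. -/
structure IsFundamental (a : Tm) : Prop where
  fund_lt : ∀ x, IsIndex x → TLt x (tp a) → TLt (fund a x) a
  fund_lt_fund : ∀ x y, IsIndex x → IsIndex y → TLt x y → TLt y (tp a) →
    TLt (fund a x) (fund a y)

namespace IsFundamental

theorem zero : IsFundamental .zero where
  fund_lt _ _ h := (h.not_lt_zero).elim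
  fund_lt_fund _ _ _ _ _ h := (h.not_lt_zero).elim

theorem of_natToTm (ht : tp a = omegaT) (hlt : ∀ n, TLt (fund a (natToTm n)) a)
    (hmono : ∀ m n, m < n → TLt (fund a (natToTm m)) (fund a (natToTm n))) :
    IsFundamental a where
  fund_lt x hx h := by
    obtain ⟨n, rfl⟩ := hx.exists_eq_natToTm_of_lt_omegaT (ht ▸ h)
    exact hlt n
  fund_lt_fund x y hx hy hxy h := by
    obtain ⟨n, rfl⟩ := hy.exists_eq_natToTm_of_lt_omegaT (ht ▸ h)
    obtain ⟨m, hmn, rfl⟩ := hx.exists_lt_eq_natToTm hxy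
    exact hmono m n hmn

theorem one : IsFundamental .one where
  fund_lt x _ _ := by rw [fund]; exact .zero_lt Tm.noConfusion
  fund_lt_fund x y _ hy hxy h := by
    obtain ⟨m, hm, rfl⟩ := hy.exists_lt_eq_natToTm (n := 1) h
    rw [Nat.lt_one_iff.1 hm] at hxy
    exact (hxy.not_lt_zero).elim

theorem add (hp : p.IsPrincipal) (hp' : p.IsPreterm) (hb : b.IsPreterm) (hb0 : b ≠ .zero)
    (hbp : TLe b.hd p) (h : IsFundamental b) : IsFundamental (.add p b) := by
  have hkeep {f : Tm} (hf : f.IsPreterm) (hbf : ¬ WordLT b f) : ¬ TLt p f.hd :=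
    not_lt_hd_of_not_wordLT hp hp' hb hb0 hf hbp hbf
  have hpb : ¬ TLt p b.hd := hkeep hb LexBelow.irrefl
  have hfund {y : Tm} (hy : IsIndex y) (hlt : TLt y (tp b)) : WordLT (fund b y) b :=
    (h.fund_lt y hy hlt).wordLT (hb.fund hy.isPreterm) hb
  constructor
  · intro x hx hlt
    rw [fund, ← hp.addT_eq_add hb0 hpb]
    exact addT_lt_addT hp (hkeep (hb.fund hx.isPreterm) (hfund hx hlt).asymm) hpb
      (h.fund_lt x hx hlt)
  · intro x y hx hy hxy hlt
    have hfx := hb.fund hx.isPreterm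
    have hfy := hb.fund hy.isPreterm
    have hmono := h.fund_lt_fund x y hx hy hxy hlt
    rw [fund, fund]
    exact addT_lt_addT hp (hkeep hfx ((hmono.wordLT hfx hfy).trans (hfund hy hlt)).asymm)
      (hkeep hfy (hfund hy hlt).asymm) hmono

section Psi

variable {i : ℕ}

theorem psi_zero : IsFundamental (.psi i .zero) where
  fund_lt x _ h := by rwa [fund_psi_zero, ← tp_psi_zero]
  fund_lt_fund x y _ _ hxy _ := by rwa [fund_psi_zero, fund_psi_zero]

theorem psi_of_tp_eq_one (h : IsFundamental a) (h1 : tp a = .one) :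
    IsFundamental (.psi i a) := by
  have hlt : TLt (fund a .zero) a :=
    h.fund_lt _ InT.zero.isIndex (h1 ▸ .zero_lt Tm.noConfusion)
  refine .of_natToTm (tp_psi_of_tp_eq_one h1) (fun n => ?_) fun m n hmn => ?_
  · rw [fund_psi_of_tp_eq_one h1]
    exact (isPrincipal_psi _ _).mulNat_lt (isPrincipal_psi _ _) (.psi_mono hlt) _
  · rw [fund_psi_of_tp_eq_one h1, fund_psi_of_tp_eq_one h1, tmToNat_natToTm, tmToNat_natToTm]
    exact (isPrincipal_psi _ _).mulNat_lt_mulNat hmn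

theorem collapseSeq_lt_collapseSeq (ha : a.IsPreterm) (h : IsFundamental a)
    (ht : tp a = .psi (i + 1) .zero) {m n : ℕ} (hmn : m < n) :
    TLt (collapseSeq i a m) (collapseSeq i a n) := by
  induction n generalizing m with
  | zero => exact (Nat.not_lt_zero m hmn).elim
  | succ n ih =>
    cases m with
    | zero => exact .zero_lt Tm.noConfusion
    | succ m =>
      exact .psi_mono (h.fund_lt_fund _ _ (ha.isIndex_collapseSeq i m)
        (ha.isIndex_collapseSeq i n) (ih (Nat.lt_of_succ_lt_succ hmn)) (ht ▸ collapseSeq_lt i a n))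

theorem psi_of_collapses (ha : a.IsPreterm) (h : IsFundamental a) (hc : Collapses i a) :
    IsFundamental (.psi i a) := by
  have hidx := ha.isIndex_collapseSeq i
  have hbound (n : ℕ) : TLt (collapseSeq i a n) (tp a) := hc.2 ▸ collapseSeq_lt i a n
  refine .of_natToTm (tp_psi_of_collapses hc) (fun n => ?_) fun m n hmn => ?_
  · rw [fund_psi_of_collapses hc]
    exact .psi_mono (h.fund_lt _ (hidx _) (hbound _))
  · rw [fund_psi_of_collapses hc, fund_psi_of_collapses hc, tmToNat_natToTm, tmToNat_natToTm]
    exact .psi_mono (h.fund_lt_fund _ _ (hidx m) (hidx n)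
      (h.collapseSeq_lt_collapseSeq ha hc.2 hmn) (hbound n))

theorem psi_of_not_collapses (h : IsFundamental a) (h0 : tp a ≠ .zero) (h1 : tp a ≠ .one)
    (hc : ¬ Collapses i a) : IsFundamental (.psi i a) := by
  have htp := tp_psi_of_not_collapses h0 h1 hc
  constructor
  · intro x hx hlt
    rw [fund_psi_of_not_collapses h0 h1 hc]
    exact .psi_mono (h.fund_lt x hx (htp ▸ hlt))
  · intro x y hx hy hxy hlt
    rw [fund_psi_of_not_collapses h0 h1 hc, fund_psi_of_not_collapses h0 h1 hc]
    exact .psi_mono (h.fund_lt_fund x y hx hy hxy (htp ▸ hlt))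

theorem psi (ha : a.IsPreterm) (h : IsFundamental a) : IsFundamental (.psi i a) := by
  by_cases h0 : tp a = .zero
  · rw [ha.tp_eq_zero_iff.1 h0]
    exact psi_zero
  by_cases h1 : tp a = .one
  · exact h.psi_of_tp_eq_one h1
  by_cases hc : Collapses i a
  · exact h.psi_of_collapses ha hc
  · exact h.psi_of_not_collapses h0 h1 hc

end Psi

end IsFundamental

theorem _root_.InT.isFundamental (ha : InT a) : IsFundamental a := by
  induction ha with
  | zero => exact .zero
  | one => exact .one
  | psi _ ha ih => exact ih.psi ha.isPreterm
  | add hp hp' hb hb0 hbp _ ih => exact ih.add hp hp'.isPreterm hb.isPreterm hb0 hbp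

theorem tp_psi_ne_one {i : ℕ} : tp (.psi i a) ≠ .one := by
  rw [tp]
  split_ifs <;> first | assumption | exact Tm.noConfusion

theorem _root_.InT.eq_fund_zero_addT_one (ha : InT a) (h : tp a = .one) :
    a = (fund a .zero).addT .one := by
  induction ha with
  | zero => exact Tm.noConfusion h
  | one => rw [fund, zero_addT]
  | psi => exact (tp_psi_ne_one h).elim
  | @add p b hp hp' hb hb0 hbp _ ih =>
    have hb' := hb.isPreterm
    have hkeep {f : Tm} (hf : f.IsPreterm) (hbf : ¬ WordLT b f) : ¬ TLt p f.hd :=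
      not_lt_hd_of_not_wordLT hp hp'.isPreterm hb' hb0 hf hbp hbf
    have hlt : TLt (fund b .zero) b :=
      hb.isFundamental.fund_lt _ InT.zero.isIndex (h ▸ .zero_lt Tm.noConfusion)
    have hpf : ¬ TLt p (fund b .zero).hd :=
      hkeep (hb'.fund .zero) (hlt.wordLT (hb'.fund .zero) hb').asymm
    have hp1 : ¬ TLt p (hd .one) := hp.not_lt_one
    calc .add p b = p.addT b := (hp.addT_eq_add hb0 (hkeep hb' LexBelow.irrefl)).symm
      _ = p.addT ((fund b .zero).addT .one) := by rw [← ih h]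
      _ = (p.addT (fund b .zero)).addT .one := (addT_assoc_of_not_lt hp hpf hp1).symm
      _ = (fund (.add p b) .zero).addT .one := by rw [fund]

end Tm

/-- Basic properties of `tp` and the fundamental sequences on `T`. -/
theorem tp_fund_basic (a : Tm) (ha : InT a) :
    (tp a = Tm.zero ↔ a = Tm.zero) ∧
    (tp a = Tm.one → a = Tm.addT (fund a Tm.zero) Tm.one) ∧
    (∀ x : Tm, InT x → TLt x (tp a) → TLt (fund a x) a) ∧
    (∀ x y : Tm, InT x → InT y → TLt x y → TLt y (tp a) →
      TLt (fund a x) (fund a y)) :=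
  ⟨ha.isPreterm.tp_eq_zero_iff, ha.eq_fund_zero_addT_one,
    fun x hx => ha.isFundamental.fund_lt x hx.isIndex,
    fun x y hx hy => ha.isFundamental.fund_lt_fund x y hx.isIndex hy.isIndex⟩
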